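/- Let U and V be finite-dimensional vector spaces over a field K and S a linear subspace of L(U,V). Assume that dim S⊥y ≤ 1 for every y ∈ V, where S⊥y = {t(y) : t ∈ S⊥}, and that codim S > 1. Then there exist a nonzero vector x ∈ U and a linear subspace R of V such that S = {s ∈ L(U,V) : s(x) ∈ R}. -/

import Mathlib

/-- The orthogonal `S⊥` of a subspace `S ⊆ L(U,V)` with respect to the trace bilinear
form `(s, t) ↦ tr (t ∘ s)`: the space of all `t : V →ₗ[K] U` with `tr (t ∘ s) = 0` for
every `s ∈ S`. -/
def tracePerp {K U V : Type*} [Field K] [AddCommGroup U] [Module K U]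
    [AddCommGroup V] [Module K V] (S : Submodule K (U →ₗ[K] V)) :
    Submodule K (V →ₗ[K] U) where
  carrier := {t | ∀ s ∈ S, LinearMap.trace K U (t ∘ₗ s) = 0}
  add_mem' := fun {a b} ha hb s hs => by
    simp only [LinearMap.add_comp, map_add, ha s hs, hb s hs, add_zero]
  zero_mem' := fun s hs => by simp
  smul_mem' := fun c t ht s hs => by
    simp only [LinearMap.smul_comp, map_smul, ht s hs, smul_zero]

noncomputable def traceDualMap (K U V : Type*) [Field K]
    [AddCommGroup U] [Module K U]
    [AddCommGroup V] [Module K V] :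
    (V →ₗ[K] U) →ₗ[K] Module.Dual K (U →ₗ[K] V) :=
  LinearMap.mk₂ K (fun t s => LinearMap.trace K U (t ∘ₗ s))
    (by intros; simp [LinearMap.add_comp]) (by intros; simp [LinearMap.smul_comp])
    (by intros; simp [LinearMap.comp_add]) (by intros; simp [LinearMap.comp_smul])

theorem traceDualMap_apply {K U V : Type*} [Field K]
    [AddCommGroup U] [Module K U]
    [AddCommGroup V] [Module K V] (t : V →ₗ[K] U) (s : U →ₗ[K] V) :
    traceDualMap K U V t s = LinearMap.trace K U (t ∘ₗ s) := rfl

open scoped TensorProduct in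
theorem trace_smulRight_aux {K U : Type*} [Field K]
    [AddCommGroup U] [Module K U] [FiniteDimensional K U] (f : Module.Dual K U) (x : U) :
    LinearMap.trace K U (f.smulRight x) = f x := by
  have := LinearMap.trace_eq_contract_apply (R := K) (M := U) (f ⊗ₜ[K] x)
  rw [contractLeft_apply] at this
  rw [← this]
  congr 1

theorem traceDualMap_bij (K U V : Type*) [Field K]
    [AddCommGroup U] [Module K U] [FiniteDimensional K U]
    [AddCommGroup V] [Module K V] [FiniteDimensional K V] :
    Function.Bijective (traceDualMap K U V) := by
  have hi : Function.Injective (traceDualMap K U V) := by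
    rw [← LinearMap.ker_eq_bot, LinearMap.ker_eq_bot']
    intro t ht
    ext v
    rw [LinearMap.zero_apply, ← Module.forall_dual_apply_eq_zero_iff K]
    intro f
    have h := LinearMap.congr_fun ht (f.smulRight v)
    rw [traceDualMap_apply] at h
    have : t ∘ₗ f.smulRight v = f.smulRight (t v) := by ext; simp
    rw [this, trace_smulRight_aux] at h
    simpa using h
  refine ⟨hi, ?_⟩
  rw [← LinearMap.injective_iff_surjective_of_finrank_eq_finrank]
  · exact hi
  · rw [Subspace.dual_finrank_eq, Module.finrank_linearMap, Module.finrank_linearMap, mul_comm]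

/-- Let `S` be a linear subspace of `L(U,V)` with `dim S⊥y ≤ 1` for
every `y ∈ V` (where `S⊥y = {t y : t ∈ S⊥}`) and `codim S > 1`. Then there are a nonzero
vector `x ∈ U` and a linear subspace `R` of `V` such that
`S = {s ∈ L(U,V) : s x ∈ R}`. -/
theorem subspace_eq_comap_of_small_perp_evaluations
    (K U V : Type*) [Field K]
    [AddCommGroup U] [Module K U] [FiniteDimensional K U]
    [AddCommGroup V] [Module K V] [FiniteDimensional K V]
    (S : Submodule K (U →ₗ[K] V))
    (h1 : ∀ y : V,
      Module.finrank K (Submodule.map (LinearMap.applyₗ y) (tracePerp S)) ≤ 1)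
    (h2 : Module.finrank K S + 1 < Module.finrank K (U →ₗ[K] V)) :
    ∃ x : U, x ≠ 0 ∧ ∃ R : Submodule K V,
      S = Submodule.comap (LinearMap.applyₗ x) R := by
  classical
  set T := tracePerp S with hT
  have hTmem : ∀ t, t ∈ T ↔ ∀ s ∈ S, LinearMap.trace K U (t ∘ₗ s) = 0 := fun t => Iff.rfl
  have hbij := traceDualMap_bij K U V
  -- double orthogonal
  have hdd : ∀ s, (∀ t ∈ T, LinearMap.trace K U (t ∘ₗ s) = 0) → s ∈ S := by
    intro s hs
    by_contra hns
    obtain ⟨f, hf, hfS⟩ := Submodule.exists_le_ker_of_notMem hns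
    obtain ⟨t, rfl⟩ := hbij.2 f
    exact hf (hs t fun s' hs' => hfS hs')
  -- dimension
  have hdim : 1 < Module.finrank K T := by
    have e : T = S.dualAnnihilator.comap (traceDualMap K U V) := by
      ext t
      rw [Submodule.mem_comap, Submodule.mem_dualAnnihilator]
      rfl
    have e2 : T.map (traceDualMap K U V) = S.dualAnnihilator := by
      rw [e, Submodule.map_comap_eq_of_surjective hbij.2]
    have e3 : Module.finrank K (T.map (traceDualMap K U V)) = Module.finrank K T :=
      (Submodule.equivMapOfInjective _ hbij.1 T).finrank_eq.symm
    have e4 := Subspace.finrank_add_finrank_dualAnnihilator_eq S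
    rw [← e2, e3] at e4
    omega
  -- dependence
  have hdep : ∀ y, ∀ t ∈ T, t y ≠ 0 → ∀ t' ∈ T, ∃ c : K, t' y = c • t y := by
    intro y t ht hty t' ht'
    obtain ⟨v, hv⟩ := finrank_le_one_iff.1 (h1 y)
    obtain ⟨c, hc⟩ := hv ⟨t y, t, ht, rfl⟩
    obtain ⟨c', hc'⟩ := hv ⟨t' y, t', ht', rfl⟩
    have hc := congrArg Subtype.val hc
    have hc' := congrArg Subtype.val hc'
    simp only [Submodule.coe_smul] at hc hc'
    have : c ≠ 0 := by
      rintro rfl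
      exact hty (by rw [← hc]; simp)
    refine ⟨c' / c, ?_⟩
    rw [← hc, ← hc', smul_smul, div_mul_cancel₀ _ this]
  obtain ⟨t0, ht0, hne⟩ : ∃ t ∈ T, t ≠ 0 := by
    apply Submodule.exists_mem_ne_zero_of_ne_bot
    intro h
    rw [h] at hdim
    simp at hdim
  obtain ⟨y0, hy0⟩ : ∃ y, t0 y ≠ 0 := by
    by_contra! h
    exact hne (LinearMap.ext h)
  obtain ⟨h, hh, hhne, hhy⟩ : ∃ h ∈ T, h ≠ 0 ∧ h y0 = 0 := by
    by_contra! hcon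
    let g : T →ₗ[K] T.map (LinearMap.applyₗ y0) :=
      (LinearMap.applyₗ y0 : (V →ₗ[K] U) →ₗ[K] U).restrict
        (fun t ht => Submodule.mem_map_of_mem ht)
    have hg : Function.Injective g := by
      rw [← LinearMap.ker_eq_bot, LinearMap.ker_eq_bot']
      rintro ⟨t, ht⟩ hgt
      have h0 : t y0 = 0 := congrArg Subtype.val hgt
      by_contra hne'
      exact hcon t ht (fun h => hne' (Subtype.ext h)) h0
    have := LinearMap.finrank_le_finrank_of_injective hg
    have := h1 y0
    omega
  -- all ranges in span of x
  have key : ∀ t ∈ T, ∀ y, ∃ c : K, t y = c • t0 y0 := by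
    by_contra! hcon
    obtain ⟨t1, ht1, y1, hx⟩ := hcon
    have hx0 : t1 y1 ≠ 0 := fun h => hx 0 (by rw [h, zero_smul])
    have hy1 : h y1 = 0 := by
      by_contra hn
      obtain ⟨c, hc⟩ := hdep y1 h hh hn t1 ht1
      obtain ⟨d, hd⟩ := hdep y1 h hh hn t0 ht0
      obtain ⟨e, he⟩ := hdep (y0 + y1) h hh (by simpa [hhy] using hn) t0 ht0
      simp only [map_add, hhy, zero_add, hd] at he
      have hz : t0 y0 = (e - d) • h y1 := by rw [sub_smul, ← he]; abel
      have hed : e - d ≠ 0 := fun h0 => hy0 (by rw [hz, h0, zero_smul])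
      apply hx (c / (e - d))
      rw [hz, smul_smul, div_mul_cancel₀ _ hed, hc]
    apply hhne
    ext y
    rw [LinearMap.zero_apply]
    by_contra hn
    -- h y is proportional to t0 y0
    obtain ⟨d, hd⟩ := hdep y h hh hn t0 ht0
    obtain ⟨e, he⟩ := hdep (y0 + y) h hh (by simpa [hhy] using hn) t0 ht0
    simp only [map_add, hhy, zero_add, hd] at he
    have hz : t0 y0 = (e - d) • h y := by rw [sub_smul, ← he]; abel
    have hed : e - d ≠ 0 := fun h0 => hy0 (by rw [hz, h0, zero_smul])
    obtain ⟨c, hc⟩ := hdep y h hh hn t1 ht1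
    obtain ⟨b, hb⟩ := hdep (y1 + y) h hh (by simpa [hy1] using hn) t1 ht1
    simp only [map_add, hy1, zero_add, hc] at hb
    have hw : t1 y1 = (b - c) • h y := by rw [sub_smul, ← hb]; abel
    apply hx ((b - c) / (e - d))
    rw [hz, smul_smul, div_mul_cancel₀ _ hed, hw]
  refine ⟨t0 y0, hy0, ⨅ t : T, LinearMap.ker (t : V →ₗ[K] U), ?_⟩
  have htr : ∀ t ∈ T, ∀ s : U →ₗ[K] V,
      (LinearMap.trace K U (t ∘ₗ s)) • t0 y0 = t (s (t0 y0)) := by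
    intro t ht s
    obtain ⟨f, hf⟩ : ∃ f : Module.Dual K U, f (t0 y0) = 1 := by
      obtain ⟨f, hf⟩ : ∃ f : Module.Dual K U, f (t0 y0) ≠ 0 := by
        by_contra! hc
        exact hy0 ((Module.forall_dual_apply_eq_zero_iff K _).1 hc)
      exact ⟨(f (t0 y0))⁻¹ • f, by simp [hf]⟩
    have hft : ∀ v, t v = f (t v) • t0 y0 := by
      intro v
      obtain ⟨c, hc⟩ := key t ht v
      rw [hc, map_smul, hf, smul_eq_mul, mul_one]
    have : t ∘ₗ s = (f ∘ₗ t ∘ₗ s).smulRight (t0 y0) := by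
      ext u
      simpa using hft (s u)
    rw [this, trace_smulRight_aux]
    exact (hft _).symm
  ext s
  simp only [Submodule.mem_comap, Submodule.mem_iInf, LinearMap.mem_ker, Subtype.forall,
    LinearMap.applyₗ_apply_apply]
  constructor
  · intro hs t ht
    rw [← htr t ht s, ht s hs, zero_smul]
  · intro hs
    apply hdd
    intro t ht
    have := htr t ht s
    rw [hs t ht] at this
    exact (smul_eq_zero.1 this).resolve_right hy0
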